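/- arXiv:2303.07916 — 5 statements merged into one kernel-verified Lean document; each statement's English description precedes it below -/
import Mathlib

section
/- Let (ḡ_k)_{0≤k≤N} be the backward quadratic flow with final value g_f. If C₊·g_f ≤ 1, then the sequence is well defined with 0 < ḡ_0 < ḡ_1 < ⋯ < ḡ_N = g_f, and for every 0 ≤ k ≤ N one has g_f/(1 + C₊·g_f·(N−k)) ≤ ḡ_k ≤ g_f/(1 + (1/2)·C₋·g_f·(N−k)). -/
noncomputable section

/-- The backward quadratic flow: `g N = gf` and, for `k < N`,
`g k` is the unique positive root of `β k * t ^ 2 + t - g (k + 1) = 0`. -/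
def QuadFlow (β : ℕ → ℝ) (N : ℕ) (gf : ℝ) (g : ℕ → ℝ) : Prop :=
  g N = gf ∧ ∀ k, k < N → g k = (-1 + Real.sqrt (1 + 4 * β k * g (k + 1))) / (2 * β k)

/-!
In the variable `1 / g` the flow is almost linear: dividing `g (k + 1) = g k * (1 + β k * g k)`
by `g k * g (k + 1)` gives `1 / g k = 1 / g (k + 1) + β k / (1 + β k * g k)`. The increment is at
most `β k`, and since `b ↦ b / (1 + b * t)` is increasing and `g k ≤ gf`, it is at least
`Cm / (1 + Cm * gf)`, hence at least `Cm / 2` when `Cm * gf ≤ 1`. Summing the increments from `k`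
to `N` gives both bounds.
-/

theorem le_add_sub_nsmul_of_le_succ_add {α : Type*} [AddCommMonoid α] [Preorder α]
    [IsOrderedAddMonoid α] {u : ℕ → α} {c : α} {N : ℕ} (h : ∀ k < N, u k ≤ u (k + 1) + c)
    {k : ℕ} (hk : k ≤ N) : u k ≤ u N + (N - k) • c := by
  induction hk using Nat.decreasingInduction with
  | self => simp
  | of_succ k hk ih =>
    calc u k ≤ u (k + 1) + c := h k hk
      _ ≤ u N + (N - (k + 1)) • c + c := by gcongr
      _ = u N + (N - k) • c := by
        rw [add_assoc, ← succ_nsmul, show N - (k + 1) + 1 = N - k by omega]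

theorem add_sub_nsmul_le_of_succ_add_le {α : Type*} [AddCommMonoid α] [Preorder α]
    [IsOrderedAddMonoid α] {u : ℕ → α} {c : α} {N : ℕ} (h : ∀ k < N, u (k + 1) + c ≤ u k)
    {k : ℕ} (hk : k ≤ N) : u N + (N - k) • c ≤ u k :=
  le_add_sub_nsmul_of_le_succ_add (α := αᵒᵈ) h hk

theorem inv_inv_add_mul {K : Type*} [Field K] {x : K} (hx : x ≠ 0) (c n : K) :
    (x⁻¹ + n * c)⁻¹ = x / (1 + c * x * n) := by
  field_simp

theorem half_mul_le_div_one_add {c s : ℝ} (hc : 0 ≤ c) (hs : -1 < s) (hs_le : s ≤ 1) :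
    1 / 2 * c ≤ c / (1 + s) := by
  rw [le_div_iff₀ (by linarith)]
  linarith [mul_le_of_le_one_right hc hs_le]

section QuadStep

/-- One backward step of the quadratic flow: the positive root of `b * t ^ 2 + t - y = 0`
when `b` and `y` are positive. -/
def quadStep (b y : ℝ) : ℝ := (-1 + √(1 + 4 * b * y)) / (2 * b)

variable {b y : ℝ}

theorem quadStep_pos (hb : 0 < b) (hy : 0 < y) : 0 < quadStep b y := by
  have hsqrt : 1 < √(1 + 4 * b * y) := Real.lt_sqrt_of_sq_lt (by nlinarith [mul_pos hb hy])
  exact div_pos (by linarith) (by positivity)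

theorem mul_quadStep_sq_add_quadStep (hb : 0 < b) (hy : 0 < y) :
    b * quadStep b y ^ 2 + quadStep b y = y := by
  have hdiscrim : discrim b 1 (-y) = √(1 + 4 * b * y) * √(1 + 4 * b * y) := by
    rw [Real.mul_self_sqrt (by positivity), discrim]
    ring
  have hroot := (quadratic_eq_zero_iff hb.ne' hdiscrim (quadStep b y)).2 (Or.inl rfl)
  linarith

theorem quadStep_lt (hb : 0 < b) (hy : 0 < y) : quadStep b y < y := by
  have ht := quadStep_pos hb hy
  have hsq : 0 < b * quadStep b y ^ 2 := by positivity
  linarith [mul_quadStep_sq_add_quadStep hb hy]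

theorem inv_quadStep (hb : 0 < b) (hy : 0 < y) :
    (quadStep b y)⁻¹ = y⁻¹ + b / (1 + b * quadStep b y) := by
  have ht := quadStep_pos hb hy
  have hfactor : y = quadStep b y * (1 + b * quadStep b y) := by
    linarith [mul_quadStep_sq_add_quadStep hb hy]
  generalize quadStep b y = t at *
  rw [hfactor]
  field_simp

theorem inv_quadStep_le (hb : 0 < b) (hy : 0 < y) : (quadStep b y)⁻¹ ≤ y⁻¹ + b := by
  have ht := quadStep_pos hb hy
  rw [inv_quadStep hb hy]
  gcongr
  exact div_le_self hb.le (le_add_of_nonneg_right (by positivity))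

theorem le_inv_quadStep {c M : ℝ} (hc : 0 < c) (hcb : c ≤ b) (hy : 0 < y) (hyM : y ≤ M) :
    y⁻¹ + c / (1 + c * M) ≤ (quadStep b y)⁻¹ := by
  have hb : 0 < b := hc.trans_le hcb
  have ht := quadStep_pos hb hy
  have htM : quadStep b y ≤ M := (quadStep_lt hb hy).le.trans hyM
  rw [inv_quadStep hb hy]
  gcongr y⁻¹ + ?_
  calc c / (1 + c * M) ≤ c / (1 + c * quadStep b y) := by gcongr
    _ ≤ b / (1 + b * quadStep b y) := by
      rw [div_le_div_iff₀ (by positivity) (by positivity)]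
      linarith

end QuadStep

theorem exists_quadFlow (β : ℕ → ℝ) (N : ℕ) (gf : ℝ) : ∃ g, QuadFlow β N gf g := by
  induction N generalizing gf with
  | zero => exact ⟨fun _ => gf, rfl, by simp⟩
  | succ N ih =>
    obtain ⟨g, hgN, hstep⟩ := ih (quadStep (β N) gf)
    refine ⟨Function.update g (N + 1) gf, by simp, fun k hk => ?_⟩
    obtain hkN | rfl := Nat.lt_succ_iff_lt_or_eq.1 hk
    · simpa [hkN.ne, hk.ne] using hstep k hkN
    · simpa [quadStep] using hgN

namespace QuadFlow

variable {β g : ℕ → ℝ} {N k : ℕ} {gf : ℝ}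

theorem eq_quadStep (hg : QuadFlow β N gf g) (hk : k < N) :
    g k = quadStep (β k) (g (k + 1)) :=
  hg.2 k hk

theorem pos (hg : QuadFlow β N gf g) (hβ : ∀ k < N, 0 < β k) (hgf : 0 < gf) (hk : k ≤ N) :
    0 < g k := by
  induction hk using Nat.decreasingInduction with
  | self => exact hg.1 ▸ hgf
  | of_succ k hk ih => exact hg.eq_quadStep hk ▸ quadStep_pos (hβ k hk) ih

theorem lt_succ (hg : QuadFlow β N gf g) (hβ : ∀ k < N, 0 < β k) (hgf : 0 < gf) (hk : k < N) :
    g k < g (k + 1) :=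
  hg.eq_quadStep hk ▸ quadStep_lt (hβ k hk) (hg.pos hβ hgf hk)

theorem le_final (hg : QuadFlow β N gf g) (hβ : ∀ k < N, 0 < β k) (hgf : 0 < gf) (hk : k ≤ N) :
    g k ≤ gf := by
  induction hk using Nat.decreasingInduction with
  | self => exact hg.1.le
  | of_succ k hk ih => exact (hg.lt_succ hβ hgf hk).le.trans ih

theorem div_one_add_le {C : ℝ} (hg : QuadFlow β N gf g) (hβ : ∀ k < N, 0 < β k)
    (hβC : ∀ k < N, β k ≤ C) (hgf : 0 < gf) (hk : k ≤ N) :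
    gf / (1 + C * gf * (N - k : ℕ)) ≤ g k := by
  have hincr (j : ℕ) (hj : j < N) : (g j)⁻¹ ≤ (g (j + 1))⁻¹ + C := by
    rw [hg.eq_quadStep hj]
    exact (inv_quadStep_le (hβ j hj) (hg.pos hβ hgf hj)).trans (by gcongr; exact hβC j hj)
  have hsum := le_add_sub_nsmul_of_le_succ_add (u := fun j => (g j)⁻¹) hincr hk
  simp only [hg.1, nsmul_eq_mul] at hsum
  rw [← inv_inv_add_mul hgf.ne']
  exact inv_le_of_inv_le₀ (hg.pos hβ hgf hk) hsum

theorem le_div_one_add {c : ℝ} (hg : QuadFlow β N gf g) (hc : 0 < c) (hcβ : ∀ k < N, c ≤ β k)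
    (hgf : 0 < gf) (hk : k ≤ N) :
    g k ≤ gf / (1 + c / (1 + c * gf) * gf * (N - k : ℕ)) := by
  have hβ (j : ℕ) (hj : j < N) : 0 < β j := hc.trans_le (hcβ j hj)
  have hincr (j : ℕ) (hj : j < N) : (g (j + 1))⁻¹ + c / (1 + c * gf) ≤ (g j)⁻¹ := by
    rw [hg.eq_quadStep hj]
    exact le_inv_quadStep hc (hcβ j hj) (hg.pos hβ hgf hj) (hg.le_final hβ hgf hj)
  have hsum := add_sub_nsmul_le_of_succ_add_le (u := fun j => (g j)⁻¹) hincr hk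
  simp only [hg.1, nsmul_eq_mul] at hsum
  rw [← inv_inv_add_mul hgf.ne']
  exact le_inv_of_le_inv₀ (by positivity) hsum

end QuadFlow

theorem stmt_0_general (Cm Cp : ℝ) (hCm : 0 < Cm) (N : ℕ) (β : ℕ → ℝ)
    (hβ : ∀ k, k < N → Cm ≤ β k ∧ β k ≤ Cp) (gf : ℝ) (hgf : 0 < gf) :
    ∃ g : ℕ → ℝ, QuadFlow β N gf g ∧
      (∀ k, k ≤ N → 0 < g k) ∧
      (∀ k, k < N → g k < g (k + 1)) ∧
      (∀ k, k ≤ N →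
        gf / (1 + Cp * gf * ((N - k : ℕ) : ℝ)) ≤ g k ∧
        g k ≤ gf / (1 + Cm / (1 + Cm * gf) * gf * ((N - k : ℕ) : ℝ))) := by
  obtain ⟨g, hg⟩ := exists_quadFlow β N gf
  have hβpos (k : ℕ) (hk : k < N) : 0 < β k := hCm.trans_le (hβ k hk).1
  exact ⟨g, hg, fun k hk => hg.pos hβpos hgf hk, fun k hk => hg.lt_succ hβpos hgf hk, fun k hk =>
    ⟨hg.div_one_add_le hβpos (fun j hj => (hβ j hj).2) hgf hk,
      hg.le_div_one_add hCm (fun j hj => (hβ j hj).1) hgf hk⟩⟩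

theorem stmt_0 (Cm Cp : ℝ) (hCm : 0 < Cm) (hCmCp : Cm ≤ Cp)
    (N : ℕ) (hN : 1 ≤ N) (β : ℕ → ℝ) (hβ : ∀ k, k < N → Cm ≤ β k ∧ β k ≤ Cp)
    (gf : ℝ) (hgf : 0 < gf) (hsmall : Cp * gf ≤ 1) :
    ∃ g : ℕ → ℝ, QuadFlow β N gf g ∧
      (∀ k, k ≤ N → 0 < g k) ∧
      (∀ k, k < N → g k < g (k + 1)) ∧
      (∀ k, k ≤ N →
        gf / (1 + Cp * gf * ((N - k : ℕ) : ℝ)) ≤ g k ∧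
        g k ≤ gf / (1 + (1 / 2) * Cm * gf * ((N - k : ℕ) : ℝ))) := by
  obtain ⟨g, hg, hpos, hlt, hbounds⟩ := stmt_0_general Cm Cp hCm N β hβ gf hgf
  have hrate := half_mul_le_div_one_add hCm.le (by linarith [mul_pos hCm hgf])
    ((mul_le_mul_of_nonneg_right hCmCp hgf.le).trans hsmall)
  exact ⟨g, hg, hpos, hlt, fun k hk => ⟨(hbounds k hk).1, (hbounds k hk).2.trans (by gcongr)⟩⟩
end
end

section
/- There exist g₀ > 0 and K > 0, depending only on C₋, C₊, C_θ, such that if 0 < g_f ≤ g₀ then the field-strength flow satisfies |z̄_k| ≤ K·ḡ_k for all 0 ≤ k ≤ N. -/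
noncomputable section

/-!
The flow equation says `β k * g k ^ 2 = g (k + 1) - g k`, so `∑ j < k, β j * g j ^ 2` telescopes
to `g k - g 0 ≤ g k`. As `Cm ≤ β j`, this gives `∑ j < k, g j ^ 2 ≤ g k / Cm`, and the length of
the path `z 0, …, z k` is at most `Cθ` times that sum.
-/

open Finset

theorem mul_sq_add_self_eq_of_eq_root {b c x : ℝ} (hb : b ≠ 0) (hdiscrim : 0 ≤ 1 + 4 * b * c)
    (hx : x = (-1 + √(1 + 4 * b * c)) / (2 * b)) : b * x ^ 2 + x = c := by
  have hs : discrim b 1 (-c) = √(1 + 4 * b * c) * √(1 + 4 * b * c) := by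
    rw [Real.mul_self_sqrt hdiscrim, discrim]
    ring
  linear_combination (quadratic_eq_zero_iff hb hs x).2 (.inl hx)

namespace QuadFlow

variable {β g : ℕ → ℝ} {N k : ℕ} {gf : ℝ}

theorem nonneg (hg : QuadFlow β N gf g) (hβ : ∀ k < N, 0 < β k) (hgf : 0 ≤ gf) (hk : k ≤ N) :
    0 ≤ g k := by
  refine Nat.decreasingInduction' (P := fun j ↦ 0 ≤ g j) (fun j hj _ hsucc ↦ ?_) hk (hg.1 ▸ hgf)
  have hβj := hβ j hj
  have hsqrt : 1 ≤ √(1 + 4 * β j * g (j + 1)) :=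
    Real.one_le_sqrt.2 (le_add_of_nonneg_right (by positivity))
  rw [hg.2 j hj]
  exact div_nonneg (by linarith) (by positivity)

theorem mul_sq_eq_sub (hg : QuadFlow β N gf g) (hβ : ∀ k < N, 0 < β k) (hgf : 0 ≤ gf)
    (hk : k < N) : β k * g k ^ 2 = g (k + 1) - g k := by
  have hβk := hβ k hk
  have hsucc : 0 ≤ g (k + 1) := hg.nonneg hβ hgf hk
  exact eq_sub_of_add_eq (mul_sq_add_self_eq_of_eq_root hβk.ne' (by positivity) (hg.2 k hk))

theorem sum_mul_sq_eq_sub (hg : QuadFlow β N gf g) (hβ : ∀ k < N, 0 < β k) (hgf : 0 ≤ gf)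
    (hk : k ≤ N) : ∑ j ∈ range k, β j * g j ^ 2 = g k - g 0 := by
  rw [← sum_range_sub g k]
  exact sum_congr rfl fun j hj ↦ hg.mul_sq_eq_sub hβ hgf ((mem_range.1 hj).trans_le hk)

theorem sum_sq_le_div {c : ℝ} (hg : QuadFlow β N gf g) (hc : 0 < c) (hβ : ∀ k < N, c ≤ β k)
    (hgf : 0 ≤ gf) (hk : k ≤ N) : ∑ j ∈ range k, g j ^ 2 ≤ g k / c := by
  have hβpos : ∀ j < N, 0 < β j := fun j hj ↦ hc.trans_le (hβ j hj)
  rw [le_div_iff₀' hc, mul_sum]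
  calc ∑ j ∈ range k, c * g j ^ 2
      ≤ ∑ j ∈ range k, β j * g j ^ 2 := by
        gcongr with j hj
        exact hβ j ((mem_range.1 hj).trans_le hk)
    _ = g k - g 0 := hg.sum_mul_sq_eq_sub hβpos hgf hk
    _ ≤ g k := sub_le_self _ (hg.nonneg hβpos hgf N.zero_le)

end QuadFlow

theorem stmt_1_general {E : Type*} [SeminormedAddCommGroup E] [NormedSpace ℝ E] {Cm Cθ : ℝ}
    (hCm : 0 < Cm) (hCθ : 0 ≤ Cθ) {N : ℕ} {β : ℕ → ℝ} (hβ : ∀ k < N, Cm ≤ β k)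
    {θ : ℕ → E} (hθ : ∀ k < N, ‖θ k‖ ≤ Cθ) {gf : ℝ} (hgf : 0 ≤ gf)
    {g : ℕ → ℝ} (hg : QuadFlow β N gf g)
    {z : ℕ → E} (hz0 : z 0 = 0) (hz : ∀ k < N, z (k + 1) = z k + g k ^ 2 • θ k)
    {k : ℕ} (hk : k ≤ N) : ‖z k‖ ≤ Cθ / Cm * g k := by
  have hstep : ∀ {j}, j < k → dist (z j) (z (j + 1)) ≤ Cθ * g j ^ 2 := fun {j} hj ↦ by
    rw [hz j (hj.trans_le hk), dist_self_add_right, norm_smul, Real.norm_of_nonneg (sq_nonneg _),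
      mul_comm]
    gcongr
    exact hθ j (hj.trans_le hk)
  calc ‖z k‖ = dist (z 0) (z k) := by rw [hz0, dist_zero_left]
    _ ≤ ∑ j ∈ range k, Cθ * g j ^ 2 := dist_le_range_sum_of_dist_le k hstep
    _ = Cθ * ∑ j ∈ range k, g j ^ 2 := (mul_sum _ _ _).symm
    _ ≤ Cθ * (g k / Cm) := by gcongr; exact hg.sum_sq_le_div hCm hβ hgf hk
    _ = Cθ / Cm * g k := by ring

theorem stmt_1 (Cm Cp Cθ : ℝ) (hCm : 0 < Cm) (hCmCp : Cm ≤ Cp) (hCθ : 0 < Cθ) :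
    ∃ g0 : ℝ, 0 < g0 ∧ ∃ K : ℝ, 0 < K ∧
      ∀ (N : ℕ), 1 ≤ N → ∀ β : ℕ → ℝ, (∀ k, k < N → Cm ≤ β k ∧ β k ≤ Cp) →
      ∀ θ : ℕ → ℝ, (∀ k, k < N → |θ k| ≤ Cθ) →
      ∀ gf : ℝ, 0 < gf → gf ≤ g0 →
      ∀ g : ℕ → ℝ, QuadFlow β N gf g →
      ∀ z : ℕ → ℝ, z 0 = 0 → (∀ k, k < N → z (k + 1) = z k + θ k * g k ^ 2) →
      ∀ k, k ≤ N → |z k| ≤ K * g k :=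
  ⟨1, one_pos, Cθ / Cm, div_pos hCθ hCm, fun _ _ _ hβ _ hθ _ hgf _ _ hg _ hz0 hz _ hk ↦
    stmt_1_general hCm hCθ.le (fun k hk ↦ (hβ k hk).1) hθ hgf.le hg hz0
      (fun k hk ↦ by rw [hz k hk, smul_eq_mul, mul_comm]) hk⟩
end
end

section
/- For every real n > 1 and real m ≥ 0 there exist g₀ > 0 and K > 0, depending only on n, m, C₋, C₊, such that if 0 < g_f ≤ g₀ then for all 0 ≤ j ≤ k ≤ N−1, Σ_{ℓ=j}^{k} β_ℓ·ḡ_ℓ^n·|log ḡ_ℓ|^m ≤ K·ḡ_{k+1}^{n−1}·|log ḡ_{k+1}|^m. -/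
noncomputable section

/-! The increments of `G x = x ^ p * w x` along a step `y = x + b * x ^ 2` control
`b * x ^ (p + 1) * w x`. Split `x ^ p` into two factors `x ^ (p / 2)`: by a Bernoulli inequality one
of them grows by the relative amount `p / 4 * (b * x)`, while the other one keeps
`x ^ (p / 2) * w x` monotone near `0` even if `w` decreases, as `|log x| ^ m` does for `m > 0`.
Along the flow these steps lead from `x = g k` to `y = g (k + 1)`, so the increments telescope. -/

lemma one_add_half_mul_le_rpow_one_add {a s : ℝ} (ha : 0 ≤ a) (hs₀ : 0 ≤ s) (hs₁ : s ≤ 1) :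
    1 + a / 2 * s ≤ (1 + s) ^ a := by
  have half_le_log : s / 2 ≤ Real.log (1 + s) :=
    calc s / 2 ≤ 2 * s / (s + 2) := by
          rw [div_le_div_iff₀ two_pos (by positivity)]
          nlinarith
      _ ≤ Real.log (1 + s) := Real.le_log_one_add_of_nonneg hs₀
  calc 1 + a / 2 * s = s / 2 * a + 1 := by ring
    _ ≤ Real.log (1 + s) * a + 1 := by gcongr
    _ ≤ Real.exp (Real.log (1 + s) * a) := Real.add_one_le_exp _
    _ = (1 + s) ^ a := (Real.rpow_def_of_pos (by positivity) a).symm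

lemma monotoneOn_mul_sub_mul_log {a : ℝ} (ha : 0 ≤ a) (m : ℝ) :
    MonotoneOn (fun u ↦ a * u - m * Real.log u) {u | 0 < u ∧ m ≤ a * u} := by
  rintro u ⟨hu, hmu⟩ v ⟨hv, -⟩ huv
  have mul_log_le : m * (Real.log v - Real.log u) ≤ a * (v - u) :=
    calc m * (Real.log v - Real.log u) ≤ a * u * (Real.log v - Real.log u) :=
          mul_le_mul_of_nonneg_right hmu (sub_nonneg.2 (Real.log_le_log hu huv))
      _ = a * u * Real.log (v / u) := by rw [Real.log_div hv.ne' hu.ne']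
      _ ≤ a * u * (v / u - 1) :=
          mul_le_mul_of_nonneg_left (Real.log_le_sub_one_of_pos (div_pos hv hu)) (by positivity)
      _ = a * (v - u) := by field_simp
  dsimp only
  linarith

lemma monotoneOn_rpow_mul_abs_log_rpow {a : ℝ} (ha : 0 < a) (m : ℝ) :
    MonotoneOn (fun x ↦ x ^ a * |Real.log x| ^ m) (Set.Ioo 0 (min 1 (Real.exp (-(m / a))))) := by
  have mem_of_mem : ∀ x ∈ Set.Ioo 0 (min 1 (Real.exp (-(m / a)))),
      0 < -Real.log x ∧ m ≤ a * -Real.log x := by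
    rintro x ⟨hx, hx_lt⟩
    have log_lt : Real.log x < -(m / a) := (Real.log_lt_iff_lt_exp hx).2 (lt_min_iff.1 hx_lt).2
    exact ⟨neg_pos.2 (Real.log_neg hx (lt_min_iff.1 hx_lt).1),
      (div_le_iff₀' ha).1 (by linarith)⟩
  have eq_exp : ∀ x ∈ Set.Ioo 0 (min 1 (Real.exp (-(m / a)))), x ^ a * |Real.log x| ^ m =
      Real.exp (-(a * -Real.log x - m * Real.log (-Real.log x))) := by
    intro x hx
    have neg_log_pos := (mem_of_mem x hx).1
    rw [abs_of_neg (neg_pos.1 neg_log_pos), Real.rpow_def_of_pos hx.1,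
      Real.rpow_def_of_pos neg_log_pos, ← Real.exp_add]
    ring_nf
  intro x hx y hy hxy
  simp only [eq_exp x hx, eq_exp y hy, Real.exp_le_exp, neg_le_neg_iff]
  exact monotoneOn_mul_sub_mul_log ha.le m (mem_of_mem y hy) (mem_of_mem x hx)
    (neg_le_neg (Real.log_le_log hx.1 hxy))

lemma mul_rpow_add_one_mul_le_sub {p b x y L M : ℝ} (hp : 0 < p) (hb : 0 ≤ b) (hx : 0 < x)
    (hbx : b * x ≤ 1) (hy : x + b * x ^ 2 = y) (hL : 0 ≤ L)
    (hLM : x ^ (p / 2) * L ≤ y ^ (p / 2) * M) :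
    b * x ^ (p + 1) * L ≤ 4 / p * (y ^ p * M) - 4 / p * (x ^ p * L) := by
  have hy₀ : 0 < y := by rw [← hy]; positivity
  have rpow_eq_mul_self : ∀ z : ℝ, 0 < z → z ^ p = z ^ (p / 2) * z ^ (p / 2) := fun z hz ↦ by
    rw [← Real.rpow_add hz, add_halves]
  have growth : x ^ (p / 2) * (1 + p / 4 * (b * x)) ≤ y ^ (p / 2) :=
    calc x ^ (p / 2) * (1 + p / 4 * (b * x)) = x ^ (p / 2) * (1 + p / 2 / 2 * (b * x)) := by ring
      _ ≤ x ^ (p / 2) * (1 + b * x) ^ (p / 2) := by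
          gcongr
          exact one_add_half_mul_le_rpow_one_add (by positivity) (by positivity) hbx
      _ = y ^ (p / 2) := by
          rw [← Real.mul_rpow hx.le (by positivity), ← hy]
          ring_nf
  rw [le_sub_iff_add_le]
  calc b * x ^ (p + 1) * L + 4 / p * (x ^ p * L)
      = 4 / p * (x ^ (p / 2) * (1 + p / 4 * (b * x)) * (x ^ (p / 2) * L)) := by
        rw [Real.rpow_add_one hx.ne', rpow_eq_mul_self x hx]
        field_simp
        ring
    _ ≤ 4 / p * (y ^ (p / 2) * (y ^ (p / 2) * M)) := by gcongr
    _ = 4 / p * (y ^ p * M) := by rw [rpow_eq_mul_self y hy₀, mul_assoc]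

namespace QuadFlow

variable {β g : ℕ → ℝ} {N k : ℕ} {gf : ℝ}

lemma add_mul_sq (h : QuadFlow β N gf g) (hk : k < N) (hβ : 0 < β k) (hg : 0 ≤ g (k + 1)) :
    g k + β k * g k ^ 2 = g (k + 1) := by
  have discrim_eq : discrim (β k) 1 (-g (k + 1)) =
      √(1 + 4 * β k * g (k + 1)) * √(1 + 4 * β k * g (k + 1)) := by
    rw [Real.mul_self_sqrt (by positivity), discrim]
    ring
  have isRoot := (quadratic_eq_zero_iff hβ.ne' discrim_eq (g k)).2 (Or.inl (h.2 k hk))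
  linarith

lemma pos_of_succ_pos (h : QuadFlow β N gf g) (hk : k < N) (hβ : 0 < β k) (hg : 0 < g (k + 1)) :
    0 < g k := by
  have one_lt_sqrt : 1 < √(1 + 4 * β k * g (k + 1)) :=
    Real.lt_sqrt_of_sq_lt (by rw [one_pow, lt_add_iff_pos_right]; positivity)
  rw [h.2 k hk]
  exact div_pos (by linarith) (by positivity)

lemma le_succ (h : QuadFlow β N gf g) (hk : k < N) (hβ : 0 < β k) (hg : 0 ≤ g (k + 1)) :
    g k ≤ g (k + 1) := by
  rw [← h.add_mul_sq hk hβ hg, le_add_iff_nonneg_right]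
  positivity

lemma mem_Ioc (h : QuadFlow β N gf g) (hβ : ∀ k < N, 0 < β k) (hgf : 0 < gf) (hk : k ≤ N) :
    g k ∈ Set.Ioc 0 gf := by
  induction hk using Nat.decreasingInduction with
  | self => simpa only [h.1] using Set.right_mem_Ioc.2 hgf
  | of_succ k hk ih =>
    exact ⟨h.pos_of_succ_pos hk (hβ k hk) ih.1, (h.le_succ hk (hβ k hk) ih.1.le).trans ih.2⟩

theorem sum_mul_rpow_mul_le (h : QuadFlow β N gf g) (hβ : ∀ k < N, 0 < β k) (hgf : 0 < gf)
    (hβgf : ∀ k < N, β k * gf ≤ 1) {p : ℝ} (hp : 0 < p) {w : ℝ → ℝ}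
    (hw : ∀ x ∈ Set.Ioc 0 gf, 0 ≤ w x)
    (hmono : MonotoneOn (fun x ↦ x ^ (p / 2) * w x) (Set.Ioc 0 gf))
    {j : ℕ} (hjk : j ≤ k) (hk : k < N) :
    ∑ l ∈ Finset.Icc j k, β l * g l ^ (p + 1) * w (g l) ≤
      4 / p * (g (k + 1) ^ p * w (g (k + 1))) - 4 / p * (g j ^ p * w (g j)) := by
  have step : ∀ l < N, β l * g l ^ (p + 1) * w (g l) ≤
      4 / p * (g (l + 1) ^ p * w (g (l + 1))) - 4 / p * (g l ^ p * w (g l)) := by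
    intro l hl
    have mem := h.mem_Ioc hβ hgf hl.le
    have mem_succ := h.mem_Ioc hβ hgf (Nat.succ_le_of_lt hl)
    have mul_le_one : β l * g l ≤ 1 :=
      (mul_le_mul_of_nonneg_left mem.2 (hβ l hl).le).trans (hβgf l hl)
    exact mul_rpow_add_one_mul_le_sub hp (hβ l hl).le mem.1 mul_le_one
      (h.add_mul_sq hl (hβ l hl) mem_succ.1.le) (hw _ mem)
      (hmono mem mem_succ (h.le_succ hl (hβ l hl) mem_succ.1.le))
  calc ∑ l ∈ Finset.Icc j k, β l * g l ^ (p + 1) * w (g l)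
      ≤ ∑ l ∈ Finset.Icc j k,
          (4 / p * (g (l + 1) ^ p * w (g (l + 1))) - 4 / p * (g l ^ p * w (g l))) :=
        Finset.sum_le_sum fun l hl ↦ step l ((Finset.mem_Icc.1 hl).2.trans_lt hk)
    _ = _ := Finset.sum_Icc_sub hjk fun l ↦ 4 / p * (g l ^ p * w (g l))

end QuadFlow

theorem stmt_3_general {C : ℝ} (hC : 0 < C) {n : ℝ} (hn : 1 < n) (m : ℝ) :
    ∃ g0 : ℝ, 0 < g0 ∧ ∀ (N : ℕ) (β : ℕ → ℝ), (∀ k < N, 0 < β k ∧ β k ≤ C) →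
      ∀ gf : ℝ, 0 < gf → gf ≤ g0 →
      ∀ g : ℕ → ℝ, QuadFlow β N gf g →
      ∀ j k : ℕ, j ≤ k → k < N →
        ∑ l ∈ Finset.Icc j k, β l * g l ^ n * |Real.log (g l)| ^ m ≤
          4 / (n - 1) * g (k + 1) ^ (n - 1) * |Real.log (g (k + 1))| ^ m := by
  have hp : 0 < n - 1 := sub_pos.2 hn
  obtain ⟨g0, hg0, hg0_lt⟩ :=
    exists_between (show 0 < min (1 / C) (min 1 (Real.exp (-(m / ((n - 1) / 2))))) by positivity)
  obtain ⟨hg0C, hg0_lt⟩ := lt_min_iff.1 hg0_lt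
  refine ⟨g0, hg0, fun N β hβ gf hgf hgf0 g h j k hjk hk ↦ ?_⟩
  have hβgf : ∀ k < N, β k * gf ≤ 1 := fun k hk ↦
    calc β k * gf ≤ C * (1 / C) := by gcongr; exacts [(hβ k hk).2, hgf0.trans hg0C.le]
      _ = 1 := mul_one_div_cancel hC.ne'
  have hmono := (monotoneOn_rpow_mul_abs_log_rpow (half_pos hp) m).mono
    (Set.Ioc_subset_Ioo_right (hgf0.trans_lt hg0_lt))
  have hsum := h.sum_mul_rpow_mul_le (fun k hk ↦ (hβ k hk).1) hgf hβgf hp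
    (w := fun x ↦ |Real.log x| ^ m) (fun x _ ↦ by positivity) hmono hjk hk
  have hgj := (h.mem_Ioc (fun k hk ↦ (hβ k hk).1) hgf (hjk.trans hk.le)).1
  rw [sub_add_cancel] at hsum
  rw [mul_assoc]
  exact hsum.trans (sub_le_self _ (by positivity))

theorem stmt_3 (Cm Cp : ℝ) (hCm : 0 < Cm) (hCmCp : Cm ≤ Cp)
    (n m : ℝ) (hn : 1 < n) (hm : 0 ≤ m) :
    ∃ g0 : ℝ, 0 < g0 ∧ ∃ K : ℝ, 0 < K ∧
      ∀ (N : ℕ), 1 ≤ N → ∀ β : ℕ → ℝ, (∀ k, k < N → Cm ≤ β k ∧ β k ≤ Cp) →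
      ∀ gf : ℝ, 0 < gf → gf ≤ g0 →
      ∀ g : ℕ → ℝ, QuadFlow β N gf g →
      ∀ j k : ℕ, j ≤ k → k < N →
        ∑ l ∈ Finset.Icc j k, β l * g l ^ n * |Real.log (g l)| ^ m ≤
          K * g (k + 1) ^ (n - 1) * |Real.log (g (k + 1))| ^ m := by
  obtain ⟨g0, hg0, hsum⟩ := stmt_3_general (hCm.trans_le hCmCp) hn m
  exact ⟨g0, hg0, 4 / (n - 1), div_pos four_pos (sub_pos.2 hn), fun N _ β hβ ↦
    hsum N β fun k hk ↦ ⟨hCm.trans_le (hβ k hk).1, (hβ k hk).2⟩⟩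
end
end

section
/- If α₀, α₁ ∈ M₂(ℂ) satisfy S⁻¹ α_μ S = Σ_ν R_{μν} α_ν for μ = 0, 1, for every R ∈ 𝒢 and every invertible S ∈ M₂(ℂ) implementing R, then there is c ∈ ℂ with α₀ = c·γ₀ and α₁ = c·γ₁. -/
noncomputable section

open scoped Matrix

/-- `R` is a 2×2 signed permutation matrix (an element of the symmetry group of the square). -/
def IsSignedPerm (R : Matrix (Fin 2) (Fin 2) ℝ) : Prop :=
  ∃ σ : Equiv.Perm (Fin 2), ∃ ε : Fin 2 → ℝ, (∀ i, ε i = 1 ∨ ε i = -1) ∧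
    ∀ i j, R i j = if j = σ i then ε i else 0

/-- `S` (with two-sided inverse `T`) implements the lattice symmetry `R` on the gamma
matrices: `S⁻¹ γ_μ S = Σ_ν R_{μν} γ_ν`. -/
def Implements (γ : Fin 2 → Matrix (Fin 2) (Fin 2) ℂ) (R : Matrix (Fin 2) (Fin 2) ℝ)
    (S T : Matrix (Fin 2) (Fin 2) ℂ) : Prop :=
  S * T = 1 ∧ T * S = 1 ∧ ∀ μ, T * γ μ * S = ∑ ν, ((R μ ν : ℝ) : ℂ) • γ ν

/-!
Conjugation by `γ₀` and by `γ₁` implements the two coordinate reflections, so `α₀` commutes with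
`γ₀` and anticommutes with `γ₁`. A matrix that anticommutes with an involution is traceless; with
the involution `γ₁` this applies to `γ₀` and to `α₀`. For traceless `2 × 2` matrices the polarized
Cayley–Hamilton identity reads `X Y + Y X = tr (X Y) • 1`, and therefore
`2 α₀ γ₀ = tr (α₀ γ₀) • 1`, that is, `α₀ = c γ₀`. Finally `γ₀ + γ₁` implements the exchange of the
two axes, and conjugating `α₀ = c γ₀` by it gives `α₁ = c γ₁`.
-/

section Clifford

variable {ι K A : Type*} [DecidableEq ι] [CommRing K] [Ring A] [Algebra K A]

variable (K) in
/-- The family `γ` satisfies the Clifford relations of the Euclidean quadratic form, with scalars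
taken in `K`. -/
def CliffordRelations (γ : ι → A) : Prop :=
  ∀ μ ν, γ μ * γ ν + γ ν * γ μ = if μ = ν then (2 : K) • (1 : A) else 0

namespace CliffordRelations

variable {γ : ι → A}

theorem mul_self [Invertible (2 : K)] (hγ : CliffordRelations K γ) (μ : ι) : γ μ * γ μ = 1 := by
  have h : (2 : K) • (γ μ * γ μ) = (2 : K) • (1 : A) := by
    rw [two_smul, hγ μ μ, if_pos rfl]
  exact (isUnit_of_invertible (2 : K)).smul_left_cancel.mp h

theorem mul_eq_neg_mul (hγ : CliffordRelations K γ) {μ ν : ι} (h : μ ≠ ν) :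
    γ μ * γ ν = -(γ ν * γ μ) :=
  eq_neg_of_add_eq_zero_left (by rw [hγ μ ν, if_neg h])

end CliffordRelations

end Clifford

section SignedPerm

variable {ι A : Type*} [Ring A]

/-- The unit `S` implements on the family `γ` the signed permutation that sends `μ` to `σ μ` with
sign `ε μ`. Signs are units of `ℤ`, so that they act on every ring. -/
def ImplementsSignedPerm (γ : ι → A) (σ : Equiv.Perm ι) (ε : ι → ℤˣ) (S : Aˣ) : Prop :=
  ∀ μ, ↑S⁻¹ * γ μ * S = ε μ • γ (σ μ)

theorem implementsSignedPerm_iff_mul_eq_mul {γ : ι → A} {σ : Equiv.Perm ι} {ε : ι → ℤˣ} {S : Aˣ} :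
    ImplementsSignedPerm γ σ ε S ↔ ∀ μ, γ μ * S = S * (ε μ • γ (σ μ)) := by
  simp only [ImplementsSignedPerm, mul_assoc, Units.inv_mul_eq_iff_eq_mul]

namespace CliffordRelations

variable {K : Type*} [CommRing K] [Invertible (2 : K)] [Algebra K A]

theorem exists_implementsSignedPerm_reflection [DecidableEq ι] {γ : ι → A}
    (hγ : CliffordRelations K γ) (ν : ι) :
    ∃ S : Aˣ, (S : A) = γ ν ∧ ImplementsSignedPerm γ 1 (fun μ => if μ = ν then 1 else -1) S := by
  refine ⟨⟨γ ν, γ ν, hγ.mul_self ν, hγ.mul_self ν⟩, rfl,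
    implementsSignedPerm_iff_mul_eq_mul.mpr fun μ => ?_⟩
  rcases eq_or_ne μ ν with rfl | h
  · simp
  · simp [h, hγ.mul_eq_neg_mul h]

theorem add_mul_self {γ : Fin 2 → A} (hγ : CliffordRelations K γ) :
    (γ 0 + γ 1) * (γ 0 + γ 1) = (2 : K) • 1 := by
  rw [mul_add, add_mul, add_mul, hγ.mul_self, hγ.mul_self, hγ.mul_eq_neg_mul zero_ne_one,
    two_smul]
  abel

theorem exists_implementsSignedPerm_swap {γ : Fin 2 → A} (hγ : CliffordRelations K γ) :
    ∃ S : Aˣ, ImplementsSignedPerm γ (Equiv.swap 0 1) 1 S := by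
  refine ⟨⟨γ 0 + γ 1, ⅟(2 : K) • (γ 0 + γ 1), ?_, ?_⟩,
    implementsSignedPerm_iff_mul_eq_mul.mpr (Fin.forall_fin_two.mpr ⟨?_, ?_⟩)⟩
  · rw [mul_smul_comm, hγ.add_mul_self, invOf_smul_smul]
  · rw [smul_mul_assoc, hγ.add_mul_self, invOf_smul_smul]
  · simp [mul_add, add_mul, hγ.mul_self, add_comm]
  · simp [mul_add, add_mul, hγ.mul_self, add_comm]

end CliffordRelations

end SignedPerm

section Matrix

variable {K : Type*} [CommRing K]

theorem trace_eq_zero_of_anticommute_involution [Invertible (2 : K)] {n : Type*} [Fintype n]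
    [DecidableEq n] {X B : Matrix n n K} (hB : B * B = 1) (hXB : X * B = -(B * X)) :
    X.trace = 0 := by
  have h : X.trace = -X.trace := by
    calc X.trace = (B * (X * B)).trace := by
          rw [Matrix.trace_mul_comm, mul_assoc, hB, mul_one]
      _ = -X.trace := by rw [hXB, mul_neg, ← mul_assoc, hB, one_mul, Matrix.trace_neg]
  exact (isUnit_of_invertible (2 : K)).mul_right_eq_zero.mp (by linear_combination h)

theorem mul_add_mul_eq_trace_fin_two (X Y : Matrix (Fin 2) (Fin 2) K) :
    X * Y + Y * X =
      X.trace • Y + Y.trace • X + ((X * Y).trace - X.trace * Y.trace) • 1 := by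
  ext i j
  fin_cases i <;> fin_cases j <;>
    simp [Matrix.mul_apply, Fin.sum_univ_two, Matrix.trace_fin_two] <;> ring

theorem eq_trace_smul_of_commute_of_anticommute [Invertible (2 : K)]
    {X A B : Matrix (Fin 2) (Fin 2) K} (hA : A * A = 1) (hB : B * B = 1) (hAB : A * B = -(B * A))
    (hXA : X * A = A * X) (hXB : X * B = -(B * X)) : X = (⅟2 * (X * A).trace) • A := by
  have trA : A.trace = 0 := trace_eq_zero_of_anticommute_involution hB hAB
  have trX : X.trace = 0 := trace_eq_zero_of_anticommute_involution hB hXB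
  have two_XA : (2 : K) • (X * A) = (X * A).trace • 1 := by
    simpa [← hXA, trA, trX, two_smul] using mul_add_mul_eq_trace_fin_two X A
  calc X = X * A * A := by rw [mul_assoc, hA, mul_one]
    _ = ⅟(2 : K) • ((2 : K) • (X * A)) * A := by rw [invOf_smul_smul]
    _ = (⅟2 * (X * A).trace) • A := by rw [two_XA, smul_smul, smul_mul_assoc, one_mul]

end Matrix

/-- The real matrix of the signed permutation that sends `i` to `σ i` with sign `ε i`, in the row
convention of `IsSignedPerm`. -/
def signedPermMatrix {ι : Type*} [DecidableEq ι] (σ : Equiv.Perm ι) (ε : ι → ℤˣ) :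
    Matrix ι ι ℝ :=
  Matrix.of fun i j => if j = σ i then ((ε i : ℤ) : ℝ) else 0

theorem isSignedPerm_signedPermMatrix (σ : Equiv.Perm (Fin 2)) (ε : Fin 2 → ℤˣ) :
    IsSignedPerm (signedPermMatrix σ ε) :=
  ⟨σ, fun i => ((ε i : ℤ) : ℝ),
    fun i => (Int.units_eq_one_or (ε i)).imp (by simp [·]) (by simp [·]), fun _ _ => rfl⟩

theorem sum_signedPermMatrix_smul {ι M : Type*} [Fintype ι] [DecidableEq ι] [AddCommGroup M]
    [Module ℂ M] (σ : Equiv.Perm ι) (ε : ι → ℤˣ) (v : ι → M) (μ : ι) :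
    ∑ ν, ((signedPermMatrix σ ε μ ν : ℝ) : ℂ) • v ν = ε μ • v (σ μ) := by
  simp [signedPermMatrix, apply_ite, ite_smul, Units.smul_def, Int.cast_smul_eq_zsmul]

theorem implements_signedPermMatrix_iff {γ : Fin 2 → Matrix (Fin 2) (Fin 2) ℂ}
    {σ : Equiv.Perm (Fin 2)} {ε : Fin 2 → ℤˣ} {S : (Matrix (Fin 2) (Fin 2) ℂ)ˣ} :
    Implements γ (signedPermMatrix σ ε) S ↑S⁻¹ ↔ ImplementsSignedPerm γ σ ε S := by
  simp only [Implements, ImplementsSignedPerm, S.mul_inv, S.inv_mul, true_and,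
    sum_signedPermMatrix_smul]

theorem stmt_18_general {K : Type*} [CommRing K] [Invertible (2 : K)]
    {γ α : Fin 2 → Matrix (Fin 2) (Fin 2) K} (hγ : CliffordRelations K γ)
    (hα : ∀ σ ε S, ImplementsSignedPerm γ σ ε S → ImplementsSignedPerm α σ ε S) :
    ∃ c : K, ∀ μ, α μ = c • γ μ := by
  have reflection (ν) : α 0 * γ ν = γ ν * ((if 0 = ν then 1 else -1 : ℤˣ) • α 0) := by
    obtain ⟨S, hS, hγS⟩ := hγ.exists_implementsSignedPerm_reflection ν
    simpa only [hS, Equiv.Perm.one_apply] using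
      implementsSignedPerm_iff_mul_eq_mul.mp (hα _ _ S hγS) 0
  obtain ⟨c, h₀⟩ : ∃ c : K, α 0 = c • γ 0 :=
    ⟨_, eq_trace_smul_of_commute_of_anticommute (hγ.mul_self 0) (hγ.mul_self 1)
      (hγ.mul_eq_neg_mul zero_ne_one) (by simpa using reflection 0) (by simpa using reflection 1)⟩
  obtain ⟨S, hγS⟩ := hγ.exists_implementsSignedPerm_swap
  have h₁ : α 1 = c • γ 1 := by
    calc α 1 = ↑S⁻¹ * α 0 * S := by simpa using (hα _ _ S hγS 0).symm
      _ = c • (↑S⁻¹ * γ 0 * S) := by rw [h₀, mul_smul_comm, smul_mul_assoc]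
      _ = c • γ 1 := by simpa using congrArg (c • ·) (hγS 0)
  exact ⟨c, Fin.forall_fin_two.mpr ⟨h₀, h₁⟩⟩

theorem stmt_18 (γ : Fin 2 → Matrix (Fin 2) (Fin 2) ℂ)
    (hsa : ∀ μ, (γ μ)ᴴ = γ μ)
    (hcl : ∀ μ ν, γ μ * γ ν + γ ν * γ μ =
      if μ = ν then (2 : ℂ) • (1 : Matrix (Fin 2) (Fin 2) ℂ) else 0)
    (α : Fin 2 → Matrix (Fin 2) (Fin 2) ℂ)
    (hα : ∀ R S T, IsSignedPerm R → Implements γ R S T →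
      ∀ μ, T * α μ * S = ∑ ν, ((R μ ν : ℝ) : ℂ) • α ν) :
    ∃ c : ℂ, ∀ μ, α μ = c • γ μ :=
  stmt_18_general hcl fun σ ε S hS => implements_signedPermMatrix_iff.mp
    ⟨S.mul_inv, S.inv_mul, hα _ S ↑S⁻¹ (isSignedPerm_signedPermMatrix σ ε)
      (implements_signedPermMatrix_iff.mpr hS)⟩
end
end

section
/- If A ∈ M₄(ℂ), identified with M₂(ℂ) ⊗ M₂(ℂ) via the Kronecker product, satisfies (S⊗S)⁻¹ A (S⊗S) = A for every R ∈ 𝒢 and every invertible S ∈ M₂(ℂ) implementing R, then there exist c, c_p, c_v ∈ ℂ with A = c·(I⊗I) + c_p·(γ₅⊗γ₅) + c_v·(γ₀⊗γ₀ + γ₁⊗γ₁). -/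
noncomputable section

open scoped Matrix
open Kronecker

/-!
Conjugating a quaternion `z` by the units of a basis and adding up with suitable signs isolates its
real part, so the generalized quaternion algebra maps injectively into every nonzero algebra with a
quaternion basis. Hence `1, γ₀, γ₁, γ₀γ₁` is a basis of `M₂(ℂ)`, and its Kronecker products form a
basis of `M₄(ℂ)`. Conjugation by an implementer of a lattice symmetry permutes this basis up to
scalars. The two reflections, implemented by `γ₀` and `γ₁`, act diagonally by distinct
sign patterns on `1, γ₀, γ₁, γ₀γ₁`, so only the coefficients of the four diagonal products survive;
the quarter turn, implemented by `1 + γ₀γ₁`, swaps `γ₀ ⊗ γ₀` and `γ₁ ⊗ γ₁` and thus equates their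
coefficients.
-/

open scoped TensorProduct Quaternion

section MonomialMaps

variable {ι κ R M N : Type*} [CommSemiring R] [AddCommMonoid M] [Module R M]
  [AddCommMonoid N] [Module R N]

lemma coord_comp_of_monomial (b : Module.Basis ι R M) {f : M →ₗ[R] M} {σ : Equiv.Perm ι}
    {s : ι → R} (hf : ∀ i, f (b i) = s i • b (σ i)) (i : ι) :
    b.coord (σ i) ∘ₗ f = s i • b.coord i := by
  classical
  refine b.ext fun j => ?_
  rcases eq_or_ne j i with rfl | hji
  · simp [hf]
  · simp [hf, hji]

lemma repr_tensorProduct_of_map_eq_self (b : Module.Basis ι R M) (c : Module.Basis κ R N)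
    {f : M →ₗ[R] M} {g : N →ₗ[R] N} {σ : Equiv.Perm ι} {τ : Equiv.Perm κ} {s : ι → R} {t : κ → R}
    (hf : ∀ i, f (b i) = s i • b (σ i)) (hg : ∀ j, g (c j) = t j • c (τ j))
    {z : M ⊗[R] N} (hz : TensorProduct.map f g z = z) (i : ι) (j : κ) :
    (b.tensorProduct c).repr z (σ i, τ j) = s i * t j * (b.tensorProduct c).repr z (i, j) := by
  have hfg (p : ι × κ) : TensorProduct.map f g (b.tensorProduct c p) =
      (s p.1 * t p.2) • b.tensorProduct c (σ.prodCongr τ p) := by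
    simp [Module.Basis.tensorProduct_apply', hf, hg, TensorProduct.smul_tmul, smul_smul, mul_comm]
  simpa [hz] using LinearMap.congr_fun (coord_comp_of_monomial _ hfg (i, j)) z

lemma eq_sum_diagonal_of_repr_eq_zero [Fintype ι] (b : Module.Basis ι R M) {z : M ⊗[R] M}
    (hz : ∀ i j, i ≠ j → (b.tensorProduct b).repr z (i, j) = 0) :
    z = ∑ i, (b.tensorProduct b).repr z (i, i) • (b i ⊗ₜ b i) := by
  conv_lhs => rw [← (b.tensorProduct b).sum_repr z, Fintype.sum_prod_type]
  refine Finset.sum_congr rfl fun i _ => ?_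
  rw [Finset.sum_eq_single i (fun j _ hji => ?_) (by simp), Module.Basis.tensorProduct_apply]
  exact smul_eq_zero_of_left (hz i j hji.symm) _

end MonomialMaps

section QuaternionBasis

lemma quaternion_sum_conj_eq_re {R : Type*} [CommRing R] {c₁ c₃ : R} (z : ℍ[R,c₁,0,c₃]) :
    let q := QuaternionAlgebra.Basis.self R (c₁ := c₁) (c₂ := 0) (c₃ := c₃)
    (c₁ * c₃) • z + c₃ • (q.i * z * q.i) + c₁ • (q.j * z * q.j) - q.k * z * q.k =
      (4 * c₁ * c₃ * z.re) • 1 := by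
  ext <;> simp <;> ring

variable {K B : Type*} [Field K] [NeZero (2 : K)] [Ring B] [Algebra K B] {c₁ c₃ : K}

section Nontrivial

variable [Nontrivial B]

lemma re_eq_zero_of_lift_eq_zero (q : QuaternionAlgebra.Basis B c₁ 0 c₃) (h₁ : c₁ ≠ 0)
    (h₃ : c₃ ≠ 0) {z : ℍ[K,c₁,0,c₃]} (hz : q.lift z = 0) : z.re = 0 := by
  have hker : q.liftHom z = 0 := hz
  have h4 : (4 : K) ≠ 0 := by
    simpa [← two_add_two_eq_four, ← two_mul] using two_ne_zero' K
  have h := congrArg q.liftHom (quaternion_sum_conj_eq_re z)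
  simp only [map_add, map_sub, map_smul, map_mul, hker, mul_zero, zero_mul, smul_zero, add_zero,
    sub_zero, map_one] at h
  simpa [h₁, h₃, h4] using h.symm

lemma quaternion_lift_injective (q : QuaternionAlgebra.Basis B c₁ 0 c₃) (h₁ : c₁ ≠ 0)
    (h₃ : c₃ ≠ 0) : Function.Injective q.lift := by
  refine (injective_iff_map_eq_zero q.liftHom).2 fun z hz => ?_
  have hre (w : ℍ[K,c₁,0,c₃]) : (w * z).re = 0 :=
    re_eq_zero_of_lift_eq_zero q h₁ h₃ <| by
      rw [q.lift_mul, show q.lift z = 0 from hz, mul_zero]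
  have hone := hre 1
  have hi := hre ⟨0, 1, 0, 0⟩
  have hj := hre ⟨0, 0, 1, 0⟩
  have hk := hre ⟨0, 0, 0, 1⟩
  ext <;> simp_all

lemma linearIndependent_one_i_j_k (q : QuaternionAlgebra.Basis B c₁ 0 c₃) (h₁ : c₁ ≠ 0)
    (h₃ : c₃ ≠ 0) : LinearIndependent K ![1, q.i, q.j, q.k] := by
  rw [Fintype.linearIndependent_iff]
  intro g hg
  have hlift : q.lift ⟨g 0, g 1, g 2, g 3⟩ = q.lift 0 := by
    simpa [QuaternionAlgebra.Basis.lift, Fin.sum_univ_four, Algebra.algebraMap_eq_smul_one]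
      using hg
  have hzero := quaternion_lift_injective q h₁ h₃ hlift
  simpa [Fin.forall_fin_succ, QuaternionAlgebra.ext_iff] using hzero

end Nontrivial

/-- The linear basis `1, i, j, k` of a four-dimensional algebra given by a quaternion basis. -/
def basisOfQuaternionBasis (q : QuaternionAlgebra.Basis B c₁ 0 c₃) (h₁ : c₁ ≠ 0) (h₃ : c₃ ≠ 0)
    (hB : Module.finrank K B = 4) : Module.Basis (Fin 4) K B :=
  haveI : Nontrivial B := Module.nontrivial_of_finrank_pos (R := K) (by lia)
  basisOfLinearIndependentOfCardEqFinrank (linearIndependent_one_i_j_k q h₁ h₃) (by simp [hB])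

lemma coe_basisOfQuaternionBasis (q : QuaternionAlgebra.Basis B c₁ 0 c₃) (h₁ : c₁ ≠ 0)
    (h₃ : c₃ ≠ 0) (hB : Module.finrank K B = 4) :
    ⇑(basisOfQuaternionBasis q h₁ h₃ hB) = ![1, q.i, q.j, q.k] :=
  coe_basisOfLinearIndependentOfCardEqFinrank _ _

end QuaternionBasis

section Conjugation

section CommRing

variable {R B : Type*} [CommRing R] [Ring B] [Algebra R B]
  (q : QuaternionAlgebra.Basis B (1 : R) 0 1)

lemma conj_i_monomial (m : Fin 4) :
    q.i * ![1, q.i, q.j, q.k] m * q.i = (![1, 1, -1, -1] m : R) • ![1, q.i, q.j, q.k] m := by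
  fin_cases m <;> simp

lemma conj_j_monomial (m : Fin 4) :
    q.j * ![1, q.i, q.j, q.k] m * q.j = (![1, -1, 1, -1] m : R) • ![1, q.i, q.j, q.k] m := by
  fin_cases m <;> simp

end CommRing

variable {K B : Type*} [Field K] [Ring B] [Algebra K B]
  (q : QuaternionAlgebra.Basis B (1 : K) 0 1)

/-- The element `1 + k`, whose conjugation action is the quarter turn `i ↦ j ↦ -i`. -/
def quarterTurn : B := 1 + q.k

/-- The inverse of `quarterTurn q`, given that `k * k = -1`. -/
def quarterTurnInv : B := (2⁻¹ : K) • (1 - q.k)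

variable [NeZero (2 : K)]

lemma quarterTurn_mul_quarterTurnInv : quarterTurn q * quarterTurnInv q = 1 := by
  rw [quarterTurn, quarterTurnInv, mul_smul_comm, inv_smul_eq_iff₀ two_ne_zero]
  simp only [add_mul, mul_sub, one_mul, mul_one, q.k_mul_k]
  module

lemma quarterTurnInv_mul_quarterTurn : quarterTurnInv q * quarterTurn q = 1 := by
  rw [quarterTurn, quarterTurnInv, smul_mul_assoc, inv_smul_eq_iff₀ two_ne_zero]
  simp only [sub_mul, mul_add, one_mul, mul_one, q.k_mul_k]
  module

lemma quarterTurn_conj_i : quarterTurnInv q * q.i * quarterTurn q = q.j := by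
  rw [quarterTurn, quarterTurnInv, smul_mul_assoc, smul_mul_assoc, inv_smul_eq_iff₀ two_ne_zero]
  simp only [sub_mul, mul_add, one_mul, mul_one, q.k_mul_i, q.i_mul_k, smul_mul_assoc, q.j_mul_k]
  module

lemma quarterTurn_conj_j : quarterTurnInv q * q.j * quarterTurn q = -q.i := by
  rw [quarterTurn, quarterTurnInv, smul_mul_assoc, smul_mul_assoc, inv_smul_eq_iff₀ two_ne_zero]
  simp only [sub_mul, mul_add, one_mul, mul_one, q.k_mul_j, q.j_mul_k, smul_mul_assoc, q.i_mul_k]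
  module

lemma quarterTurn_conj_k : quarterTurnInv q * q.k * quarterTurn q = q.k := by
  have hcomm : q.k * quarterTurn q = quarterTurn q * q.k := by
    rw [quarterTurn, mul_add, add_mul, mul_one, one_mul]
  rw [mul_assoc, hcomm, ← mul_assoc, quarterTurnInv_mul_quarterTurn, one_mul]

lemma quarterTurn_conj_monomial (m : Fin 4) :
    quarterTurnInv q * ![1, q.i, q.j, q.k] m * quarterTurn q =
      (![1, 1, -1, 1] m : K) • ![1, q.i, q.j, q.k] (Equiv.swap 1 2 m) := by
  fin_cases m
  · simpa [Equiv.swap_apply_def] using quarterTurnInv_mul_quarterTurn q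
  · simpa using quarterTurn_conj_i q
  · simpa using quarterTurn_conj_j q
  · simpa [Equiv.swap_apply_def] using quarterTurn_conj_k q

end Conjugation

section TensorSquare

/-- Conjugation `X ⊗ Y ↦ T X S ⊗ T Y S` on `B ⊗ B`, where `T` stands for the inverse of `S`. -/
def tensorConj (R : Type*) {B : Type*} [CommRing R] [Ring B] [Algebra R B] (T S : B) :
    B ⊗[R] B →ₗ[R] B ⊗[R] B :=
  TensorProduct.map (.mulLeftRight R (T, S)) (.mulLeftRight R (T, S))

lemma kroneckerLinearEquiv_tensorConj {R n : Type*} [CommRing R] [Fintype n] [DecidableEq n]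
    (T S : Matrix n n R) (z : Matrix n n R ⊗[R] Matrix n n R) :
    kroneckerLinearEquiv n n n n R (tensorConj R T S z) =
      (T ⊗ₖ T) * kroneckerLinearEquiv n n n n R z * (S ⊗ₖ S) := by
  induction z with
  | zero => simp
  | tmul X Y => simp [tensorConj, Matrix.mul_kronecker_mul]
  | add z w hz hw => simp only [map_add, hz, hw, mul_add, add_mul]

lemma reflection_signs_ne_one {R : Type*} [Ring R] [NeZero (2 : R)] {m n : Fin 4} (hmn : m ≠ n) :
    (![1, 1, -1, -1] m * ![1, 1, -1, -1] n : R) ≠ 1 ∨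
      (![1, -1, 1, -1] m * ![1, -1, 1, -1] n : R) ≠ 1 := by
  have hneg : (-1 : R) ≠ 1 := fun h =>
    two_ne_zero' R (one_add_one_eq_two (R := R) ▸ neg_eq_iff_add_eq_zero.1 h)
  fin_cases m <;> fin_cases n <;> simp [hneg] at hmn ⊢

variable {K B : Type*} [Field K] [NeZero (2 : K)] [Ring B] [Algebra K B]

theorem exists_eq_of_tensorConj_eq_self (q : QuaternionAlgebra.Basis B (1 : K) 0 1)
    (hB : Module.finrank K B = 4) {z : B ⊗[K] B} (hi : tensorConj K q.i q.i z = z)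
    (hj : tensorConj K q.j q.j z = z)
    (hturn : tensorConj K (quarterTurnInv q) (quarterTurn q) z = z) :
    ∃ c ck cv : K, z = c • (1 ⊗ₜ 1) + ck • (q.k ⊗ₜ q.k) + cv • (q.i ⊗ₜ q.i + q.j ⊗ₜ q.j) := by
  let b := basisOfQuaternionBasis q one_ne_zero one_ne_zero hB
  have hb : ⇑b = ![1, q.i, q.j, q.k] := coe_basisOfQuaternionBasis ..
  let a (m n : Fin 4) : K := (b.tensorProduct b).repr z (m, n)
  have hai (m n : Fin 4) : a m n = ![1, 1, -1, -1] m * ![1, 1, -1, -1] n * a m n :=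
    repr_tensorProduct_of_map_eq_self b b (σ := 1) (τ := 1)
      (hb ▸ conj_i_monomial q) (hb ▸ conj_i_monomial q) hi m n
  have haj (m n : Fin 4) : a m n = ![1, -1, 1, -1] m * ![1, -1, 1, -1] n * a m n :=
    repr_tensorProduct_of_map_eq_self b b (σ := 1) (τ := 1)
      (hb ▸ conj_j_monomial q) (hb ▸ conj_j_monomial q) hj m n
  have hswap : a 2 2 = 1 * 1 * a 1 1 :=
    repr_tensorProduct_of_map_eq_self b b
      (hb ▸ quarterTurn_conj_monomial q) (hb ▸ quarterTurn_conj_monomial q) hturn 1 1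
  have hoff (m n : Fin 4) (hmn : m ≠ n) : a m n = 0 := by
    by_contra hne
    rcases reflection_signs_ne_one (R := K) hmn with h | h
    · exact h ((mul_eq_right₀ hne).1 (hai m n).symm)
    · exact h ((mul_eq_right₀ hne).1 (haj m n).symm)
  have hz : z = ∑ m, a m m • (b m ⊗ₜ b m) := eq_sum_diagonal_of_repr_eq_zero b hoff
  refine ⟨a 0 0, a 3 3, a 1 1, ?_⟩
  simp only [hz, Fin.sum_univ_four, hb, hswap, Matrix.cons_val]
  module

end TensorSquare

section GammaMatrices

/-- Two Clifford generators `γ₀, γ₁`, as the quaternion basis with `i = γ₀` and `j = γ₁`. -/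
@[simps]
def gammaQuaternionBasis {K B : Type*} [Field K] [NeZero (2 : K)] [Ring B] [Algebra K B]
    (γ : Fin 2 → B)
    (hcl : ∀ μ ν, γ μ * γ ν + γ ν * γ μ = if μ = ν then (2 : K) • (1 : B) else 0) :
    QuaternionAlgebra.Basis B (1 : K) 0 1 :=
  have hsq (μ : Fin 2) : γ μ * γ μ = 1 :=
    smul_right_injective B (two_ne_zero' K) (by simpa [two_smul] using hcl μ μ)
  { i := γ 0
    j := γ 1
    k := γ 0 * γ 1
    i_mul_i := by simp [hsq]
    j_mul_j := by simp [hsq]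
    i_mul_j := rfl
    j_mul_i := by simpa [eq_neg_iff_add_eq_zero] using hcl 1 0 }

lemma exists_isSignedPerm_implements {γ : Fin 2 → Matrix (Fin 2) (Fin 2) ℂ}
    {S T : Matrix (Fin 2) (Fin 2) ℂ} (hST : S * T = 1) (hTS : T * S = 1)
    (σ : Equiv.Perm (Fin 2)) {ε : Fin 2 → ℝ} (hε : ∀ μ, ε μ = 1 ∨ ε μ = -1)
    (hconj : ∀ μ, T * γ μ * S = (ε μ : ℂ) • γ (σ μ)) :
    ∃ R, IsSignedPerm R ∧ Implements γ R S T := by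
  refine ⟨.of fun μ ν => if ν = σ μ then ε μ else 0, ⟨σ, ε, hε, fun _ _ => rfl⟩, hST, hTS, ?_⟩
  intro μ
  simp [hconj, apply_ite Complex.ofReal, ite_smul]

lemma exists_implements_i (q : QuaternionAlgebra.Basis (Matrix (Fin 2) (Fin 2) ℂ) (1 : ℂ) 0 1) :
    ∃ R, IsSignedPerm R ∧ Implements ![q.i, q.j] R q.i q.i := by
  refine exists_isSignedPerm_implements (by simp) (by simp) 1 (ε := ![1, -1]) ?_ ?_ <;>
    simp [Fin.forall_fin_two]

lemma exists_implements_j (q : QuaternionAlgebra.Basis (Matrix (Fin 2) (Fin 2) ℂ) (1 : ℂ) 0 1) :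
    ∃ R, IsSignedPerm R ∧ Implements ![q.i, q.j] R q.j q.j := by
  refine exists_isSignedPerm_implements (by simp) (by simp) 1 (ε := ![-1, 1]) ?_ ?_ <;>
    simp [Fin.forall_fin_two]

lemma exists_implements_quarterTurn
    (q : QuaternionAlgebra.Basis (Matrix (Fin 2) (Fin 2) ℂ) (1 : ℂ) 0 1) :
    ∃ R, IsSignedPerm R ∧ Implements ![q.i, q.j] R (quarterTurn q) (quarterTurnInv q) := by
  refine exists_isSignedPerm_implements (quarterTurn_mul_quarterTurnInv q)
    (quarterTurnInv_mul_quarterTurn q) (Equiv.swap 0 1) (ε := ![1, -1])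
    (by simp [Fin.forall_fin_two]) ?_
  simp [Fin.forall_fin_two, quarterTurn_conj_i, quarterTurn_conj_j]

theorem stmt_19_general (γ : Fin 2 → Matrix (Fin 2) (Fin 2) ℂ)
    (hcl : ∀ μ ν, γ μ * γ ν + γ ν * γ μ =
      if μ = ν then (2 : ℂ) • (1 : Matrix (Fin 2) (Fin 2) ℂ) else 0)
    (A : Matrix (Fin 2 × Fin 2) (Fin 2 × Fin 2) ℂ)
    (hA : ∀ R S T, IsSignedPerm R → Implements γ R S T →
      (T ⊗ₖ T) * A * (S ⊗ₖ S) = A) :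
    ∃ c cp cv : ℂ,
      A = c • ((1 : Matrix (Fin 2) (Fin 2) ℂ) ⊗ₖ (1 : Matrix (Fin 2) (Fin 2) ℂ)) +
        cp • ((Complex.I • (γ 0 * γ 1)) ⊗ₖ (Complex.I • (γ 0 * γ 1))) +
        cv • (γ 0 ⊗ₖ γ 0 + γ 1 ⊗ₖ γ 1) := by
  let q := gammaQuaternionBasis γ hcl
  let e := kroneckerLinearEquiv (Fin 2) (Fin 2) (Fin 2) (Fin 2) ℂ
  have hγ : ![q.i, q.j] = γ := funext <| Fin.forall_fin_two.2 ⟨rfl, rfl⟩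
  have hfix {S T} (h : ∃ R, IsSignedPerm R ∧ Implements ![q.i, q.j] R S T) :
      tensorConj ℂ T S (e.symm A) = e.symm A := by
    obtain ⟨R, hR, himp⟩ := h
    refine e.injective ?_
    rw [kroneckerLinearEquiv_tensorConj, e.apply_symm_apply, hA R S T hR (hγ ▸ himp)]
  obtain ⟨c, ck, cv, hz⟩ := exists_eq_of_tensorConj_eq_self q (by simp [Module.finrank_matrix])
    (hfix (exists_implements_i q)) (hfix (exists_implements_j q))
    (hfix (exists_implements_quarterTurn q))
  refine ⟨c, -ck, cv, ?_⟩
  rw [LinearEquiv.symm_apply_eq] at hz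
  simpa [e, q, Matrix.smul_kronecker, Matrix.kronecker_smul, smul_smul] using hz

end GammaMatrices

theorem stmt_19 (γ : Fin 2 → Matrix (Fin 2) (Fin 2) ℂ)
    (hsa : ∀ μ, (γ μ)ᴴ = γ μ)
    (hcl : ∀ μ ν, γ μ * γ ν + γ ν * γ μ =
      if μ = ν then (2 : ℂ) • (1 : Matrix (Fin 2) (Fin 2) ℂ) else 0)
    (A : Matrix (Fin 2 × Fin 2) (Fin 2 × Fin 2) ℂ)
    (hA : ∀ R S T, IsSignedPerm R → Implements γ R S T →
      (T ⊗ₖ T) * A * (S ⊗ₖ S) = A) :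
    ∃ c cp cv : ℂ,
      A = c • ((1 : Matrix (Fin 2) (Fin 2) ℂ) ⊗ₖ (1 : Matrix (Fin 2) (Fin 2) ℂ)) +
        cp • ((Complex.I • (γ 0 * γ 1)) ⊗ₖ (Complex.I • (γ 0 * γ 1))) +
        cv • (γ 0 ⊗ₖ γ 0 + γ 1 ⊗ₖ γ 1) :=
  stmt_19_general γ hcl A hA
end
end
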